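/- For every n ≥ 1, the recurrence coefficients of the truncated Laguerre polynomials satisfy the first Laguerre–Freud equation a_{n+1} − a_{n−1} + b_n² − b_{n−1}² + (z + α + 2n)·(b_{n−1} − b_n) − 2·(b_{n−1} + b_n) + 2z = 0. -/

import Mathlib

open MeasureTheory intervalIntegral Polynomial

/-!
The weight `w x = x ^ α * exp (-x)` satisfies a Pearson equation `(φ w)' = ψ w` with
`φ = x (z - x)` vanishing at both ends of `[0, z]`, so integration by parts gives
`⟨ℓ, φ p' + ψ p⟩ = 0` for every polynomial `p`. Take `p = P n ^ 2` and divide by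
`⟨ℓ, P n ^ 2⟩`: orthogonality turns every term into an expression in `a`, `b` and the subleading
coefficient `s n` of `P n`. Since `s n - s (n + 1) = b n`, the subleading coefficients cancel from
the difference of the identities for `n + 1` and `n`, and what is left is the Laguerre–Freud
equation.
-/

namespace TruncatedLaguerre

section Polynomial

variable {R : Type*} [CommRing R]

lemma coeff_X_mul_derivative (p : R[X]) (k : ℕ) :
    (X * derivative p).coeff k = k * p.coeff k := by
  cases k with
  | zero => simp
  | succ k => rw [coeff_X_mul, coeff_derivative]; push_cast; ring

lemma coeff_X_mul_natDegree (p : R[X]) : (X * p).coeff p.natDegree = p.nextCoeff := by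
  cases h : p.natDegree with
  | zero => simp [nextCoeff, h]
  | succ k => simp [nextCoeff, h]

lemma coeff_X_mul_derivative_sub (p : R[X]) (c : R) (k : ℕ) :
    (X * derivative p - C c * p).coeff k = (k - c) * p.coeff k := by
  rw [coeff_sub, coeff_X_mul_derivative, coeff_C_mul, sub_mul]

lemma degree_X_mul_derivative_sub_lt (p : R[X]) :
    (X * derivative p - C (p.natDegree : R) * p).degree < (p.natDegree : WithBot ℕ) := by
  rw [degree_lt_iff_coeff_zero]
  intro k hk
  rw [coeff_X_mul_derivative_sub]
  rcases hk.eq_or_lt with rfl | hlt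
  · rw [sub_self, zero_mul]
  · rw [coeff_eq_zero_of_natDegree_lt hlt, mul_zero]

lemma natDegree_X_mul_le_of_degree_lt {p : R[X]} {n : ℕ} (hp : p.degree < n) :
    (X * p).natDegree ≤ n := by
  nontriviality R
  rcases eq_or_ne p 0 with rfl | hp0
  · simp
  · rw [natDegree_X_mul hp0]
    exact (natDegree_lt_iff_degree_lt hp0).2 hp

lemma coeff_X_mul_X_mul_derivative_sub (p : R[X]) :
    (X * (X * derivative p - C (p.natDegree : R) * p)).coeff p.natDegree = -p.nextCoeff := by
  cases h : p.natDegree with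
  | zero => simp [nextCoeff, h]
  | succ k =>
    rw [coeff_X_mul, coeff_X_mul_derivative_sub, nextCoeff, h]
    simp

end Polynomial

section Functional

variable {R : Type*} [CommRing R] {u : R[X] →ₗ[R] R} {P : Sequence R} {a b : ℕ → R}

/-- `P` is the sequence of monic orthogonal polynomials of the linear functional `u`. That `P n` has
degree `n` is part of `Polynomial.Sequence`. -/
structure IsMonicOrthogonal (u : R[X] →ₗ[R] R) (P : Sequence R) : Prop where
  monic : ∀ n, (P n).Monic
  orthogonal : Pairwise fun m n => u (P m * P n) = 0

/-- `P` satisfies the three-term recurrence with coefficients `a` and `b`. As `a 0 = 0`, the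
truncated index `0 - 1 = 0` in `P (n - 1)` stands for the convention `P (-1) = 0`. -/
structure IsThreeTermRecurrence (P : Sequence R) (a b : ℕ → R) : Prop where
  zero : a 0 = 0
  X_mul : ∀ n, X * P n = P (n + 1) + C (b n) * P n + C (a n) * P (n - 1)

/-- The distributional Pearson equation `(φ u)' = ψ u` of a semiclassical functional `u`, tested
against polynomials. -/
def IsPearson (u : R[X] →ₗ[R] R) (φ ψ : R[X]) : Prop :=
  ∀ p, u (φ * derivative p + ψ * p) = 0

lemma map_C_mul (u : R[X] →ₗ[R] R) (c : R) (p : R[X]) : u (C c * p) = c * u p := by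
  rw [C_mul', map_smul, smul_eq_mul]

lemma map_mul_of_degree_le_two (u : R[X] →ₗ[R] R) {φ : R[X]} (hφ : φ.degree ≤ 2) (q : R[X]) :
    u (φ * q) = φ.coeff 2 * u (X ^ 2 * q) + φ.coeff 1 * u (X * q) + φ.coeff 0 * u q := by
  conv_lhs => rw [eq_quadratic_of_degree_le_two hφ]
  simp only [add_mul, mul_assoc, map_add, map_C_mul]

namespace IsMonicOrthogonal

lemma coeff_self (hP : IsMonicOrthogonal u P) (n : ℕ) : (P n).coeff n = 1 := by
  simpa using (hP.monic n).coeff_natDegree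

lemma map_mul_eq_zero_of_degree_lt (hP : IsMonicOrthogonal u P) {n : ℕ} {q : R[X]}
    (hq : q.degree < n) : u (q * P n) = 0 := by
  have hspan : q ∈ Submodule.span R (P '' Set.Iio n) := by
    rwa [P.span_degreeLT fun k _ => by simp [(hP.monic k).leadingCoeff], mem_degreeLT]
  have hker : Submodule.span R (P '' Set.Iio n) ≤
      LinearMap.ker (u ∘ₗ LinearMap.mulRight R (P n)) := by
    rw [Submodule.span_le]
    rintro _ ⟨k, hk, rfl⟩
    exact hP.orthogonal (Set.mem_Iio.1 hk).ne
  exact hker hspan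

lemma map_mul_of_natDegree_le (hP : IsMonicOrthogonal u P) {n : ℕ} {q : R[X]}
    (hq : q.natDegree ≤ n) : u (q * P n) = q.coeff n * u (P n * P n) := by
  have hlt : (q - C (q.coeff n) * P n).degree < n := by
    rw [degree_lt_iff_coeff_zero]
    intro k hk
    rw [coeff_sub, coeff_C_mul]
    rcases hk.eq_or_lt with rfl | hk
    · rw [hP.coeff_self, mul_one, sub_self]
    · rw [coeff_eq_zero_of_natDegree_lt (hq.trans_lt hk),
        coeff_eq_zero_of_natDegree_lt ((P.natDegree_eq n).trans_lt hk), mul_zero, sub_zero]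
  rw [← sub_eq_zero, ← map_C_mul, ← map_sub, ← mul_assoc, ← sub_mul,
    hP.map_mul_eq_zero_of_degree_lt hlt]

lemma map_derivative_mul_self (hP : IsMonicOrthogonal u P) (n : ℕ) :
    u (derivative (P n) * P n) = 0 :=
  hP.map_mul_eq_zero_of_degree_lt <| by
    simpa using degree_derivative_lt (P.ne_zero n)

lemma map_X_mul_derivative_mul_self (hP : IsMonicOrthogonal u P) (n : ℕ) :
    u (X * (derivative (P n) * P n)) = n * u (P n * P n) := by
  have hlt := degree_X_mul_derivative_sub_lt (P n)
  rw [P.natDegree_eq] at hlt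
  rw [← sub_eq_zero, ← map_C_mul, ← map_sub, ← hP.map_mul_eq_zero_of_degree_lt hlt]
  congr 1
  ring

lemma map_X_mul_self_mul_succ (hP : IsMonicOrthogonal u P) (n : ℕ) :
    u (X * (P n * P (n + 1))) = u (P (n + 1) * P (n + 1)) := by
  have hdeg : (X * P n).natDegree ≤ n + 1 := by
    simpa only [add_comm] using natDegree_mul_le_of_le natDegree_X_le (P.natDegree_eq n).le
  rw [← mul_assoc, hP.map_mul_of_natDegree_le hdeg, coeff_X_mul, hP.coeff_self, one_mul]

lemma map_X_mul_self_mul_self (hP : IsMonicOrthogonal u P) (hrec : IsThreeTermRecurrence P a b)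
    (n : ℕ) : u (X * (P n * P n)) = b n * u (P n * P n) := by
  have hprev : a n * u (P (n - 1) * P n) = 0 := by
    cases n with
    | zero => rw [hrec.zero, zero_mul]
    | succ k => rw [Nat.add_sub_cancel, hP.orthogonal (Nat.ne_of_lt k.lt_succ_self), mul_zero]
  rw [← mul_assoc, hrec.X_mul]
  simp only [add_mul, mul_assoc, map_add, map_C_mul, hprev,
    hP.orthogonal (Nat.succ_ne_self n)]
  ring

lemma map_X_mul_succ_mul_self (hP : IsMonicOrthogonal u P) (hrec : IsThreeTermRecurrence P a b)
    (n : ℕ) : u (X * (P (n + 1) * P n)) = a (n + 1) * u (P n * P n) := by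
  rw [← mul_assoc, hrec.X_mul, Nat.add_sub_cancel]
  simp only [add_mul, mul_assoc, map_add, map_C_mul, hP.orthogonal (Nat.succ_ne_self n),
    hP.orthogonal (show n + 1 + 1 ≠ n by omega)]
  ring

lemma map_X_sq_mul_self_mul_self (hP : IsMonicOrthogonal u P) (hrec : IsThreeTermRecurrence P a b)
    (n : ℕ) :
    u (X ^ 2 * (P n * P n)) = (a (n + 1) + b n ^ 2 + a n) * u (P n * P n) := by
  have hprev : a n * u (X * (P (n - 1) * P n)) = a n * u (P n * P n) := by
    cases n with
    | zero => rw [hrec.zero, zero_mul, zero_mul]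
    | succ k => rw [Nat.add_sub_cancel, hP.map_X_mul_self_mul_succ]
  calc u (X ^ 2 * (P n * P n))
      = u (X * ((X * P n) * P n)) := by congr 1; ring
    _ = u (X * (P (n + 1) * P n)) + b n * u (X * (P n * P n))
          + a n * u (X * (P (n - 1) * P n)) := by
        rw [hrec.X_mul, ← map_C_mul, ← map_C_mul, ← map_add, ← map_add]
        congr 1
        ring
    _ = (a (n + 1) + b n ^ 2 + a n) * u (P n * P n) := by
        rw [hP.map_X_mul_succ_mul_self hrec, hP.map_X_mul_self_mul_self hrec, hprev]
        ring

lemma map_X_sq_mul_derivative_mul_self (hP : IsMonicOrthogonal u P)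
    (hrec : IsThreeTermRecurrence P a b) (n : ℕ) :
    u (X ^ 2 * (derivative (P n) * P n)) = (n * b n - (P n).nextCoeff) * u (P n * P n) := by
  have hdeg := natDegree_X_mul_le_of_degree_lt (degree_X_mul_derivative_sub_lt (P n))
  have hcoeff := coeff_X_mul_X_mul_derivative_sub (P n)
  rw [P.natDegree_eq] at hdeg hcoeff
  calc u (X ^ 2 * (derivative (P n) * P n))
      = n * u (X * (P n * P n)) + u (X * (X * derivative (P n) - C (n : R) * P n) * P n) := by
        rw [← map_C_mul, ← map_add]
        congr 1
        ring
    _ = (n * b n - (P n).nextCoeff) * u (P n * P n) := by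
        rw [hP.map_X_mul_self_mul_self hrec, hP.map_mul_of_natDegree_le hdeg, hcoeff]
        ring

lemma nextCoeff_eq_nextCoeff_succ_add (hP : IsMonicOrthogonal u P)
    (hrec : IsThreeTermRecurrence P a b) (n : ℕ) :
    (P n).nextCoeff = (P (n + 1)).nextCoeff + b n := by
  have hprev : a n * (P (n - 1)).coeff n = 0 := by
    cases n with
    | zero => rw [hrec.zero, zero_mul]
    | succ k => rw [coeff_eq_zero_of_natDegree_lt (by simp), mul_zero]
  have hnext : (P (n + 1)).nextCoeff = (P (n + 1)).coeff n := by simp [nextCoeff]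
  calc (P n).nextCoeff
      = (X * P n).coeff n := by rw [← coeff_X_mul_natDegree, P.natDegree_eq]
    _ = (P (n + 1)).nextCoeff + b n := by
        rw [hrec.X_mul, coeff_add, coeff_add, coeff_C_mul, coeff_C_mul, hP.coeff_self, mul_one,
          hprev, add_zero, hnext]

lemma laguerre_freud_nextCoeff [NoZeroDivisors R] (hP : IsMonicOrthogonal u P)
    (hrec : IsThreeTermRecurrence P a b) {φ ψ : R[X]} (hφ : φ.degree ≤ 2) (hψ : ψ.degree ≤ 2)
    (hu : IsPearson u φ ψ) {n : ℕ} (hn : u (P n * P n) ≠ 0) :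
    2 * (φ.coeff 2 * (n * b n - (P n).nextCoeff) + φ.coeff 1 * n)
      + ψ.coeff 2 * (a (n + 1) + b n ^ 2 + a n) + ψ.coeff 1 * b n + ψ.coeff 0 = 0 := by
  refine (mul_eq_zero.1 ?_).resolve_right hn
  have hpearson : 2 * u (φ * (derivative (P n) * P n)) + u (ψ * (P n * P n)) = 0 := by
    rw [← hu (P n * P n), derivative_mul, two_mul, ← map_add, ← map_add]
    congr 1
    ring
  rw [map_mul_of_degree_le_two u hφ, map_mul_of_degree_le_two u hψ,
    hP.map_X_sq_mul_derivative_mul_self hrec, hP.map_X_mul_derivative_mul_self,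
    hP.map_derivative_mul_self, hP.map_X_sq_mul_self_mul_self hrec,
    hP.map_X_mul_self_mul_self hrec] at hpearson
  linear_combination hpearson

theorem laguerre_freud [NoZeroDivisors R] (hP : IsMonicOrthogonal u P)
    (hrec : IsThreeTermRecurrence P a b) {φ ψ : R[X]} (hφ : φ.degree ≤ 2) (hψ : ψ.degree ≤ 2)
    (hu : IsPearson u φ ψ) (hne : ∀ n, u (P n * P n) ≠ 0) (n : ℕ) :
    ψ.coeff 2 * (a (n + 2) - a n + b (n + 1) ^ 2 - b n ^ 2)
      + ψ.coeff 1 * (b (n + 1) - b n)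
      + 2 * φ.coeff 2 * ((n + 1) * b (n + 1) - (n - 1) * b n) + 2 * φ.coeff 1 = 0 := by
  have hn := hP.laguerre_freud_nextCoeff hrec hφ hψ hu (hne n)
  have hsucc := hP.laguerre_freud_nextCoeff hrec hφ hψ hu (hne (n + 1))
  push_cast at hsucc
  linear_combination hsucc - hn - 2 * φ.coeff 2 * hP.nextCoeff_eq_nextCoeff_succ_add hrec n

end IsMonicOrthogonal

end Functional

section Weight

variable {w : ℝ → ℝ} {l r : ℝ}

lemma intervalIntegrable_eval_mul (hw : IntervalIntegrable w volume l r) (p : ℝ[X]) :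
    IntervalIntegrable (fun x => p.eval x * w x) volume l r :=
  hw.continuousOn_mul p.continuousOn

/-- The functional `p ↦ ∫ x in l..r, p x * w x` of an integrable weight `w`. -/
noncomputable def weightFunctional (hw : IntervalIntegrable w volume l r) : ℝ[X] →ₗ[ℝ] ℝ where
  toFun p := ∫ x in l..r, p.eval x * w x
  map_add' p q := by
    simp only [eval_add, add_mul]
    exact integral_add (intervalIntegrable_eval_mul hw p) (intervalIntegrable_eval_mul hw q)
  map_smul' c p := by
    simp only [eval_smul, smul_eq_mul, mul_assoc, intervalIntegral.integral_const_mul,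
      RingHom.id_apply]

lemma weightFunctional_apply (hw : IntervalIntegrable w volume l r) (p : ℝ[X]) :
    weightFunctional hw p = ∫ x in l..r, p.eval x * w x := rfl

lemma isPearson_weightFunctional (hlr : l ≤ r) (hw : IntervalIntegrable w volume l r)
    {φ ψ : ℝ[X]} (hcont : ContinuousOn (fun x => φ.eval x * w x) (Set.Icc l r))
    (hderiv : ∀ x ∈ Set.Ioo l r, HasDerivAt (fun x => φ.eval x * w x) (ψ.eval x * w x) x)
    (hl : φ.eval l * w l = 0) (hr : φ.eval r * w r = 0) :
    IsPearson (weightFunctional hw) φ ψ := by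
  intro p
  have hprod : ∀ x ∈ Set.Ioo l r, HasDerivAt (fun x => p.eval x * (φ.eval x * w x))
      ((φ * derivative p + ψ * p).eval x * w x) x := by
    intro x hx
    refine ((p.hasDerivAt x).mul (hderiv x hx)).congr_deriv ?_
    simp only [eval_add, eval_mul]
    ring
  rw [weightFunctional_apply, integral_eq_sub_of_hasDerivAt_of_le hlr
    (p.continuousOn.mul hcont) hprod (intervalIntegrable_eval_mul hw _)]
  simp only [Pi.mul_apply, hl, hr, mul_zero, sub_self]

lemma weightFunctional_mul_self_pos (hlr : l < r) (hw : IntervalIntegrable w volume l r)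
    (hpos : ∀ x ∈ Set.Ioo l r, 0 < w x) {p : ℝ[X]} (hp : p ≠ 0) :
    0 < weightFunctional hw (p * p) := by
  have hnonneg : 0 ≤ᵐ[volume.restrict (Set.uIoc l r)] fun x => (p * p).eval x * w x := by
    rw [Set.uIoc_of_le hlr.le, ← restrict_Ioo_eq_restrict_Ioc]
    refine ae_restrict_of_forall_mem measurableSet_Ioo fun x hx => ?_
    simp only [eval_mul, Pi.zero_apply]
    exact mul_nonneg (mul_self_nonneg _) (hpos x hx).le
  have hsupport : Set.Ioo l r \ p.rootSet ℝ ⊆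
      (Function.support fun x => (p * p).eval x * w x) ∩ Set.Ioc l r := by
    rintro x ⟨hx, hroot⟩
    have hx_eval : p.eval x ≠ 0 := fun h => hroot (by simpa [mem_rootSet, hp] using h)
    exact ⟨by simpa using ⟨hx_eval, (hpos x hx).ne'⟩, Set.Ioo_subset_Ioc_self hx⟩
  rw [weightFunctional_apply, integral_pos_iff_support_of_nonneg_ae' hnonneg
    (intervalIntegrable_eval_mul hw _)]
  refine ⟨hlr, lt_of_lt_of_le ?_ (measure_mono hsupport)⟩
  rw [measure_sdiff_null ((rootSet_finite p ℝ).measure_zero _)]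
  simpa using hlr

end Weight

section Laguerre

variable {α : ℝ}

/-- The weight of the Laguerre polynomials, a positive function on `0 < x`; the truncated functional
integrates against it over `[0, z]`. -/
noncomputable def laguerreWeight (α x : ℝ) : ℝ := x ^ α * Real.exp (-x)

lemma laguerreWeight_pos {x : ℝ} (hx : 0 < x) : 0 < laguerreWeight α x :=
  mul_pos (Real.rpow_pos_of_pos hx α) (Real.exp_pos _)

lemma intervalIntegrable_laguerreWeight (hα : -1 < α) (l r : ℝ) :
    IntervalIntegrable (laguerreWeight α) volume l r :=
  (intervalIntegrable_rpow' hα).mul_continuousOn (by fun_prop)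

lemma mul_laguerreWeight (hα : α ≠ -1) (x : ℝ) :
    x * laguerreWeight α x = laguerreWeight (α + 1) x := by
  rcases eq_or_ne x 0 with rfl | hx
  · rw [laguerreWeight, laguerreWeight, Real.zero_rpow (mt eq_neg_of_add_eq_zero_left hα),
      zero_mul, zero_mul]
  · rw [laguerreWeight, laguerreWeight, Real.rpow_add_one hx]
    ring

lemma continuous_laguerreWeight (hα : 0 ≤ α) : Continuous (laguerreWeight α) :=
  (Real.continuous_rpow_const hα).mul (by fun_prop)

lemma hasDerivAt_laguerreWeight_add_one {x : ℝ} (hx : x ≠ 0) :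
    HasDerivAt (laguerreWeight (α + 1)) ((α + 1 - x) * laguerreWeight α x) x := by
  have hpow : HasDerivAt (fun x : ℝ => x ^ (α + 1)) ((α + 1) * x ^ α) x := by
    simpa using Real.hasDerivAt_rpow_const (p := α + 1) (Or.inl hx)
  refine (hpow.mul (hasDerivAt_neg x).exp).congr_deriv ?_
  rw [laguerreWeight, Real.rpow_add_one hx]
  ring

/-- The polynomial `φ` in the Pearson equation `(φ w)' = ψ w` of the Laguerre weight `w` on
`[0, z]`. The factor `z - x`, absent for the untruncated weight, removes the boundary term at
`z`. -/
noncomputable def pearsonPhi (z : ℝ) : ℝ[X] := X * (C z - X)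

/-- The polynomial `ψ` in the Pearson equation `(φ w)' = ψ w` of the Laguerre weight `w` on
`[0, z]`. -/
noncomputable def pearsonPsi (α z : ℝ) : ℝ[X] := X ^ 2 - C (2 + α + z) * X + C (z * (1 + α))

lemma degree_pearsonPhi_le (z : ℝ) : (pearsonPhi z).degree ≤ 2 := by
  rw [pearsonPhi]
  compute_degree

lemma degree_pearsonPsi_le (α z : ℝ) : (pearsonPsi α z).degree ≤ 2 := by
  rw [pearsonPsi]
  compute_degree

lemma coeff_one_pearsonPhi (z : ℝ) : (pearsonPhi z).coeff 1 = z := by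
  simp [pearsonPhi, coeff_X_mul]

lemma coeff_two_pearsonPhi (z : ℝ) : (pearsonPhi z).coeff 2 = -1 := by
  simp [pearsonPhi, coeff_X_mul]

lemma coeff_one_pearsonPsi (α z : ℝ) : (pearsonPsi α z).coeff 1 = -(2 + α + z) := by
  simp [pearsonPsi, -map_add, -map_mul, coeff_X_pow, coeff_C]

lemma coeff_two_pearsonPsi (α z : ℝ) : (pearsonPsi α z).coeff 2 = 1 := by
  simp [pearsonPsi, -map_add, -map_mul]

lemma pearsonPhi_mul_laguerreWeight (hα : α ≠ -1) (z : ℝ) :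
    (fun x => (pearsonPhi z).eval x * laguerreWeight α x) =
      fun x => (z - x) * laguerreWeight (α + 1) x := by
  funext x
  rw [← mul_laguerreWeight hα]
  simp only [pearsonPhi, eval_mul, eval_sub, eval_X, eval_C]
  ring

lemma hasDerivAt_pearsonPhi_mul_laguerreWeight (hα : α ≠ -1) (z : ℝ) {x : ℝ} (hx : x ≠ 0) :
    HasDerivAt (fun x => (pearsonPhi z).eval x * laguerreWeight α x)
      ((pearsonPsi α z).eval x * laguerreWeight α x) x := by
  rw [pearsonPhi_mul_laguerreWeight hα]
  refine (((hasDerivAt_id x).const_sub z).mul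
    (hasDerivAt_laguerreWeight_add_one hx)).congr_deriv ?_
  rw [← mul_laguerreWeight hα]
  simp only [pearsonPsi, eval_add, eval_sub, eval_mul, eval_pow, eval_X, eval_C, id_eq]
  ring

lemma isPearson_laguerreWeight (hα : -1 < α) {z : ℝ} (hz : 0 ≤ z) :
    IsPearson (weightFunctional (intervalIntegrable_laguerreWeight hα 0 z))
      (pearsonPhi z) (pearsonPsi α z) := by
  refine isPearson_weightFunctional hz _ ?_
    (fun x hx => hasDerivAt_pearsonPhi_mul_laguerreWeight hα.ne' z hx.1.ne')
    (by simp [pearsonPhi]) (by simp [pearsonPhi])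
  rw [pearsonPhi_mul_laguerreWeight hα.ne']
  exact ((continuous_const.sub continuous_id).mul
    (continuous_laguerreWeight (by linarith))).continuousOn

end Laguerre

end TruncatedLaguerre

open TruncatedLaguerre

/-- First Laguerre–Freud equation for the recurrence coefficients of the truncated
Laguerre polynomials. -/
theorem truncated_laguerre_freud_one (α z : ℝ) (hα : -1 < α) (hz : 0 < z)
    (P : ℕ → Polynomial ℝ)
    (hP_monic : ∀ n, (P n).Monic)
    (hP_deg : ∀ n, (P n).natDegree = n)
    (hP_orth : ∀ m n, m ≠ n →
      ∫ x in (0:ℝ)..z, (P m).eval x * (P n).eval x * x ^ α * Real.exp (-x) = 0)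
    (a b : ℕ → ℝ)
    (ha0 : a 0 = 0)
    (hrec0 : Polynomial.X * P 0 = P 1 + Polynomial.C (b 0) * P 0)
    (hrec : ∀ n, 1 ≤ n →
      Polynomial.X * P n = P (n + 1) + Polynomial.C (b n) * P n + Polynomial.C (a n) * P (n - 1)) :
    ∀ n : ℕ, 1 ≤ n →
      a (n + 1) - a (n - 1) + (b n) ^ 2 - (b (n - 1)) ^ 2
        + (z + α + 2 * (n : ℝ)) * (b (n - 1) - b n)
        - 2 * (b (n - 1) + b n) + 2 * z = 0 := by
  let u := weightFunctional (intervalIntegrable_laguerreWeight hα 0 z)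
  let S : Sequence ℝ := ⟨P, fun n => by rw [degree_eq_natDegree (hP_monic n).ne_zero, hP_deg]⟩
  have hS : IsMonicOrthogonal u S :=
    ⟨hP_monic, fun m n hmn => by
      simpa [u, S, weightFunctional_apply, laguerreWeight, mul_assoc] using hP_orth m n hmn⟩
  have hS_rec : IsThreeTermRecurrence S a b := by
    refine ⟨ha0, fun n => ?_⟩
    rcases n.eq_zero_or_pos with rfl | hn
    · simpa [S, ha0] using hrec0
    · exact hrec n hn
  have hS_ne (n : ℕ) : u (S n * S n) ≠ 0 :=
    (weightFunctional_mul_self_pos hz _ (fun x hx => laguerreWeight_pos hx.1) (S.ne_zero n)).ne'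
  intro n hn
  obtain ⟨m, rfl⟩ := Nat.exists_eq_add_of_le' hn
  have hfreud := hS.laguerre_freud hS_rec (degree_pearsonPhi_le z) (degree_pearsonPsi_le α z)
    (isPearson_laguerreWeight hα hz.le) hS_ne m
  rw [coeff_one_pearsonPhi, coeff_two_pearsonPhi, coeff_one_pearsonPsi, coeff_two_pearsonPsi]
    at hfreud
  rw [Nat.add_sub_cancel]
  push_cast
  linear_combination hfreud
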